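/- There exists a POVM on ℂ³ with exactly 8 elements, each of rank at most one, such that the map sending each pure state ρ to its outcome probability vector (tr(ρ F_1),...,tr(ρ F_8)) is injective on the set of pure states; that is, a rank-1 PSIR-complete POVM on ℂ³ with 8 elements exists. -/

import Mathlib

open Matrix BigOperators ComplexOrder

/-- The pure state (rank-one projection) `|φ⟩⟨φ|` associated to a vector `φ`. -/
noncomputable def pureState {d : ℕ} (φ : Fin d → ℂ) : Matrix (Fin d) (Fin d) ℂ :=
  Matrix.vecMulVec φ (star φ)

/-- `φ` is a unit vector. -/
def IsUnitVec {d : ℕ} (φ : Fin d → ℂ) : Prop := star φ ⬝ᵥ φ = 1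

open Complex in
lemma lin_aux (x00 x01 x02 x10 x11 x12 x20 x21 x22 i : ℂ) (hi : i * i = -1)
  (h0 : x00 + x11 + x22 + x01 + x10 + x02*i - x20*i + x12*i - x21*i = 0)
  (h1 : x00 + x11 + x22 - x01 - x10 + x02 + x20 - x12 - x21 = 0)
  (h2 : x00 + x11 + x22 + x01 + x10 - x02*i + x20*i - x12*i + x21*i = 0)
  (h3 : 2*x00 + x22 + x02*(1-i) + x20*(1+i) = 0)
  (h4 : x00 + x11 + x22 - x01*i + x10*i - x02 - x20 - x12*i + x21*i = 0)
  (h5 : x00 + x11 + x22 - x01 - x10 + x02*i - x20*i - x12*i + x21*i = 0)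
  (h6 : 2*x11 + x22 + x12*(1+i) + x21*(1-i) = 0)
  (h7 : x00 + x11 + x22 + x01*i - x10*i - x02 - x20 + x12*i - x21*i = 0) :
  x01 = 0 ∧ x10 = 0 ∧ x02 = 0 ∧ x20 = 0 ∧ x12 = 0 ∧ x21 = 0 ∧ x11 = x00 ∧ x22 = -2*x00 := by
  refine ⟨?_, ?_, ?_, ?_, ?_, ?_, ?_, ?_⟩ <;> grind

/-- The eight vectors. -/
noncomputable def VV : Fin 8 → Fin 3 → ℂ :=
  ![![-Complex.I,-Complex.I,1],![1,-1,1],![Complex.I,Complex.I,1],![1+Complex.I,0,1],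
    ![-1,Complex.I,1],![-Complex.I,Complex.I,1],![0,1-Complex.I,1],![-1,-Complex.I,1]]

lemma tr_aux (φ v : Fin 3 → ℂ) : (pureState φ * ((1/8 : ℂ) • Matrix.vecMulVec v (star v))).trace
   = (1/8) * ∑ i, ∑ j, φ i * star (φ j) * v j * star (v i) := by
  simp [pureState, Matrix.trace, Matrix.mul_apply, Matrix.vecMulVec_apply, Fin.sum_univ_three]
  ring

theorem stmt_9 :
    ∃ F : Fin 8 → Matrix (Fin 3) (Fin 3) ℂ,
      (∀ k, (F k).PosSemidef) ∧ (∀ k, (F k).rank ≤ 1) ∧ (∑ k, F k = 1) ∧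
      (∀ φ ψ : Fin 3 → ℂ, IsUnitVec φ → IsUnitVec ψ →
        (∀ k, (pureState φ * F k).trace = (pureState ψ * F k).trace) →
        pureState φ = pureState ψ) := by
  refine ⟨fun k => (1/8 : ℂ) • Matrix.vecMulVec (VV k) (star (VV k)), ?_, ?_, ?_, ?_⟩
  · intro k
    refine (Matrix.posSemidef_vecMulVec_self_star (VV k)).smul ?_
    rw [one_div, inv_nonneg]
    norm_num
  · intro k
    show ((1/8 : ℂ) • Matrix.vecMulVec (VV k) (star (VV k))).rank ≤ 1
    rw [← Matrix.smul_vecMulVec]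
    exact Matrix.rank_vecMulVec_le _ _
  · ext i j
    have hI := Complex.I_mul_I
    simp only [Matrix.sum_apply, Matrix.smul_apply, Matrix.vecMulVec_apply, Pi.star_apply,
      Fin.sum_univ_eight, smul_eq_mul]
    fin_cases i <;> fin_cases j <;> simp [VV] <;> grind
  · intro φ ψ _ _ h
    have hI := Complex.I_mul_I
    simp only [tr_aux] at h
    have hx : ∀ k, ∑ i, ∑ j, (φ i * star (φ j) - ψ i * star (ψ j)) * VV k j * star (VV k i) = 0 := by
      intro k
      have := h k
      simp only [sub_mul, Finset.sum_sub_distrib]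
      linear_combination 8 * this
    have hd : ∀ x0 x1 x2 y0 y1 y2 a0 a1 a2 b0 b1 b2 : ℂ,
        !![x0*y0-a0*b0, x0*y1-a0*b1, x0*y2-a0*b2;
           x1*y0-a1*b0, x1*y1-a1*b1, x1*y2-a1*b2;
           x2*y0-a2*b0, x2*y1-a2*b1, x2*y2-a2*b2].det = 0 := by
      intros
      simp [Matrix.det_fin_three]
      ring
    have hd := hd (φ 0) (φ 1) (φ 2) (star (φ 0)) (star (φ 1)) (star (φ 2))
      (ψ 0) (ψ 1) (ψ 2) (star (ψ 0)) (star (ψ 1)) (star (ψ 2))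
    have key : ∀ X : Fin 3 → Fin 3 → ℂ,
        (∀ k, ∑ i, ∑ j, X i j * VV k j * star (VV k i) = 0) →
        X 0 1 = 0 ∧ X 1 0 = 0 ∧ X 0 2 = 0 ∧ X 2 0 = 0 ∧ X 1 2 = 0 ∧ X 2 1 = 0 ∧
          X 1 1 = X 0 0 ∧ X 2 2 = -2 * X 0 0 := by
      intro X hX
      have e0 := hX 0
      have e1 := hX 1
      have e2 := hX 2
      have e3 := hX 3
      have e4 := hX 4
      have e5 := hX 5
      have e6 := hX 6
      have e7 := hX 7
      simp [Fin.sum_univ_three, VV] at e0 e1 e2 e3 e4 e5 e6 e7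
      apply lin_aux _ _ _ _ _ _ _ _ _ Complex.I hI <;> clear hx h hd <;> grind
    obtain ⟨h01, h10, h02, h20, h12, h21, h11, h22⟩ := key _ hx
    rw [h01, h10, h02, h20, h12, h21, h11, h22] at hd
    simp only [Matrix.det_fin_three] at hd
    simp at hd
    ext i j
    simp only [pureState, Matrix.vecMulVec_apply, Pi.star_apply]
    rw [← sub_eq_zero]
    have h00 : φ 0 * star (φ 0) - ψ 0 * star (ψ 0) = 0 := by simpa using hd
    rw [h00] at h11 h22
    rw [mul_zero] at h22
    fin_cases i <;> fin_cases j <;> assumption
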